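/- Let D′ ⋐ D ⊂ ℝ^{2n+1} be bounded open sets, let s ≥ 2n + 3 and 0 ≤ k ≤ s be integers. Then there exists a constant C > 0 such that for all smooth functions f, g : cl(D) → ℝ one has ‖f·g‖_{D′,k} ≤ C ‖f‖_{D,s} ‖g‖_{D,k}. -/

import Mathlib

open MeasureTheory Bornology

noncomputable section

variable {E : Type*} [NormedAddCommGroup E] [NormedSpace ℝ E]

/-- The standard contact form `η₀ = dx^{2n+1} - Σ x^{n+j} dx^j` on `ℝ^{2n+1}`
(0-indexed coordinates): `η₀(x)(v) = v_{2n} - Σ_{j<n} x_{n+j} v_j`. -/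
def eta0 (n : ℕ) (x v : Fin (2*n+1) → ℝ) : ℝ :=
  v ⟨2*n, by omega⟩ -
    ∑ j : Fin n, x ⟨n + j, by have := j.2; omega⟩ * v ⟨j, by have := j.2; omega⟩

/-- `dη₀ = Σ_{j<n} dx^j ∧ dx^{n+j}`. -/
def dEta0 (n : ℕ) (u v : Fin (2*n+1) → ℝ) : ℝ :=
  ∑ j : Fin n,
    (u ⟨j, by have := j.2; omega⟩ * v ⟨n + j, by have := j.2; omega⟩ -
     u ⟨n + j, by have := j.2; omega⟩ * v ⟨j, by have := j.2; omega⟩)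

/-- The horizontal vector fields: for `j < n`, `X_j = ∂_j + x_{n+j} ∂_{2n}`;
for `n ≤ j < 2n`, `X_j = ∂_j` (0-indexed). -/
def Xvec (n : ℕ) (j : Fin (2*n)) (x : Fin (2*n+1) → ℝ) : Fin (2*n+1) → ℝ :=
  if h : (j : ℕ) < n then
    (Pi.single (⟨j, by omega⟩ : Fin (2*n+1)) 1 : Fin (2*n+1) → ℝ)
      + x ⟨n + j, by omega⟩ • (Pi.single (⟨2*n, by omega⟩ : Fin (2*n+1)) 1 : Fin (2*n+1) → ℝ)
  else
    (Pi.single (⟨j, by have := j.2; omega⟩ : Fin (2*n+1)) 1 : Fin (2*n+1) → ℝ)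

/-- The horizontal derivative `X_j f`. -/
def hDeriv (n : ℕ) (j : Fin (2*n)) (f : (Fin (2*n+1) → ℝ) → E)
    (x : Fin (2*n+1) → ℝ) : E :=
  fderiv ℝ f x (Xvec n j x)

/-- Iterated horizontal derivative `X_I f = X_{i₁} ⋯ X_{i_t} f`. -/
def XI (n : ℕ) : List (Fin (2*n)) → ((Fin (2*n+1) → ℝ) → E) → ((Fin (2*n+1) → ℝ) → E)
  | [], f => f
  | j :: I, f => hDeriv n j (XI n I f)

/-- Squared Folland–Stein norm `‖f‖_{D,s}² = Σ_{|I| ≤ s} ∫_D ‖X_I f‖²`. -/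
def fsNormSq (n : ℕ) (D : Set (Fin (2*n+1) → ℝ)) (s : ℕ)
    (f : (Fin (2*n+1) → ℝ) → E) : ℝ :=
  ∑ t ∈ Finset.range (s+1), ∑ I : Fin t → Fin (2*n),
    ∫ x in D, ‖XI n (List.ofFn I) f x‖^2

/-- The Folland–Stein norm `‖f‖_{D,s}`. -/
def fsNorm (n : ℕ) (D : Set (Fin (2*n+1) → ℝ)) (s : ℕ)
    (f : (Fin (2*n+1) → ℝ) → E) : ℝ :=
  Real.sqrt (fsNormSq n D s f)

/-- Ordinary partial derivative `∂_i f`. -/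
def pDeriv (n : ℕ) (i : Fin (2*n+1)) (f : (Fin (2*n+1) → ℝ) → E)
    (x : Fin (2*n+1) → ℝ) : E :=
  fderiv ℝ f x (Pi.single i 1 : Fin (2*n+1) → ℝ)

/-- Iterated ordinary partial derivative. -/
def pI (n : ℕ) : List (Fin (2*n+1)) → ((Fin (2*n+1) → ℝ) → E) → ((Fin (2*n+1) → ℝ) → E)
  | [], f => f
  | i :: I, f => pDeriv n i (pI n I f)

/-- The Reeb derivative `T₀ f = ∂_{2n} f` (0-indexed). -/
def T0Deriv (n : ℕ) (f : (Fin (2*n+1) → ℝ) → E) (x : Fin (2*n+1) → ℝ) : E :=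
  fderiv ℝ f x (Pi.single (⟨2*n, by omega⟩ : Fin (2*n+1)) 1 : Fin (2*n+1) → ℝ)

/-- `X` is a contact vector field on `D`:  `dη₀(X, X_j) + X_j(η₀(X)) = 0` for all
horizontal `X_j`. -/
def IsContactVF (n : ℕ) (D : Set (Fin (2*n+1) → ℝ))
    (X : (Fin (2*n+1) → ℝ) → (Fin (2*n+1) → ℝ)) : Prop :=
  ∀ j : Fin (2*n), ∀ x ∈ D,
    dEta0 n (X x) (Xvec n j x) + hDeriv n j (fun y => eta0 n y (X y)) x = 0

/-- The contact vector field with generating function `g`: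
`X_g = g T₀ + Σ_j (-(X_{n+j} g) X_j + (X_j g) X_{n+j})`. -/
def genVF (n : ℕ) (g : (Fin (2*n+1) → ℝ) → ℝ) (x : Fin (2*n+1) → ℝ) :
    Fin (2*n+1) → ℝ :=
  g x • (Pi.single (⟨2*n, by omega⟩ : Fin (2*n+1)) 1 : Fin (2*n+1) → ℝ)
  + ∑ j : Fin n,
      (-(hDeriv n (⟨n + j, by have := j.2; omega⟩ : Fin (2*n)) g x) •
          Xvec n (⟨j, by have := j.2; omega⟩ : Fin (2*n)) x
        + (hDeriv n (⟨j, by have := j.2; omega⟩ : Fin (2*n)) g x) •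
          Xvec n (⟨n + j, by have := j.2; omega⟩ : Fin (2*n)) x)

/-!
A cutoff that is `1` near `closure D'` and supported in `D` reduces the estimate to functions with
compact support, and the Leibniz rule reduces it to bounds for `∫ ‖X_A u‖² ‖X_B v‖²` with
`|A| + |B| ≤ k`.

Each field `X_j`, and the Reeb field `T`, is constant along its own integral curves, which are
therefore straight lines. Hence the fundamental theorem of calculus and the Cauchy–Schwarz
inequality bound `‖u‖²` by the integral of `‖X_j u‖²` along such a line. Iterating over the `2n`
horizontal directions and `T` gives a Sobolev inequality: these line integrals compose, by
Fubini's theorem, to the integral over the whole space. They are moreover self-adjoint, because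
the flows preserve volume, so for a product `‖u‖² ‖v‖²` the directions may be shared between `u`
and `v` at will, and the budget of derivatives decides how. As `T = [X_{n+i}, X_i]`, the Reeb
direction costs two horizontal derivatives, and `2n + 2` derivatives beyond those already spent
suffice altogether.
-/

open Set Filter Metric
open scoped ENNReal NNReal ContDiff Topology

section Flow

variable {V ι : Type*} [AddCommGroup V] [Module ℝ V]

/-- A vector field that is constant along each of the lines `r ↦ p + r • W p`, so that these lines
are its integral curves. -/
def IsStraight (W : V → V) : Prop :=
  ∀ p (r : ℝ), W (p + r • W p) = W p

/-- The integral of `φ` along the line through `p` directed by `W p`. -/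
def flowIntegral (W : V → V) (φ : V → ℝ≥0∞) (p : V) : ℝ≥0∞ :=
  ∫⁻ r : ℝ, φ (p + r • W p)

/-- The composition of the flow integrals of the fields `W j`, `j ∈ I`, that of the head of `I`
being applied first. -/
def iteratedFlowIntegral (W : ι → V → V) (I : List ι) (φ : V → ℝ≥0∞) : V → ℝ≥0∞ :=
  I.foldl (fun ψ j => flowIntegral (W j) ψ) φ

lemma flowIntegral_mono (W : V → V) {φ ψ : V → ℝ≥0∞} (h : φ ≤ ψ) :
    flowIntegral W φ ≤ flowIntegral W ψ :=
  fun _ => lintegral_mono fun _ => h _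

lemma flowIntegral_const_mul (W : V → V) (φ : V → ℝ≥0∞) (c : ℝ≥0) :
    flowIntegral W (fun p => c * φ p) = fun p => c * flowIntegral W φ p :=
  funext fun _ => lintegral_const_mul' _ _ ENNReal.coe_ne_top

lemma iteratedFlowIntegral_append (W : ι → V → V) (I J : List ι) (φ : V → ℝ≥0∞) :
    iteratedFlowIntegral W (I ++ J) φ =
      iteratedFlowIntegral W J (iteratedFlowIntegral W I φ) :=
  List.foldl_append

lemma iteratedFlowIntegral_mono (W : ι → V → V) (I : List ι) {φ ψ : V → ℝ≥0∞} (h : φ ≤ ψ) :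
    iteratedFlowIntegral W I φ ≤ iteratedFlowIntegral W I ψ := by
  induction I generalizing φ ψ with
  | nil => exact h
  | cons j _ ih => exact ih (flowIntegral_mono _ h)

lemma iteratedFlowIntegral_const_mul (W : ι → V → V) (I : List ι) (φ : V → ℝ≥0∞) (c : ℝ≥0) :
    iteratedFlowIntegral W I (fun p => c * φ p) = fun p => c * iteratedFlowIntegral W I φ p := by
  induction I generalizing φ with
  | nil => rfl
  | cons j I ih =>
    simp only [iteratedFlowIntegral, List.foldl_cons, flowIntegral_const_mul] at ih ⊢
    exact ih _

variable [MeasurableSpace V] [MeasurableAdd₂ V] [MeasurableSMul₂ ℝ V]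

lemma measurable_flowIntegral {W : V → V} (hW : Measurable W) {φ : V → ℝ≥0∞}
    (hφ : Measurable φ) : Measurable (flowIntegral W φ) :=
  (hφ.comp (by fun_prop : Measurable fun q : V × ℝ => q.1 + q.2 • W q.1)).lintegral_prod_right'

lemma measurable_iteratedFlowIntegral {W : ι → V → V} (hW : ∀ j, Measurable (W j)) (I : List ι)
    {φ : V → ℝ≥0∞} (hφ : Measurable φ) : Measurable (iteratedFlowIntegral W I φ) := by
  induction I generalizing φ with
  | nil => exact hφ
  | cons j _ ih => exact ih (measurable_flowIntegral (hW j) hφ)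

lemma IsStraight.lintegral_flowIntegral_mul {W : V → V} (hW : IsStraight W) (hWm : Measurable W)
    {μ : Measure V} [SFinite μ] (hμ : ∀ r : ℝ, MeasurePreserving (fun p => p + r • W p) μ μ)
    {φ ψ : V → ℝ≥0∞} (hφ : Measurable φ) (hψ : Measurable ψ) :
    ∫⁻ p, flowIntegral W φ p * ψ p ∂μ = ∫⁻ p, φ p * flowIntegral W ψ p ∂μ := by
  have hback (p : V) (r : ℝ) : p + r • W p + (-r) • W (p + r • W p) = p := by
    rw [hW, add_assoc, ← add_smul, add_neg_cancel, zero_smul, add_zero]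
  calc ∫⁻ p, flowIntegral W φ p * ψ p ∂μ
      = ∫⁻ p, (∫⁻ r : ℝ, φ (p + r • W p) * ψ p) ∂μ :=
        lintegral_congr fun p => (lintegral_mul_const _ (by fun_prop)).symm
    _ = ∫⁻ r : ℝ, (∫⁻ p, φ (p + r • W p) * ψ p ∂μ) :=
        lintegral_lintegral_swap (by fun_prop)
    _ = ∫⁻ r : ℝ, (∫⁻ p, φ p * ψ (p + (-r) • W p) ∂μ) := by
        refine lintegral_congr fun r => ?_
        rw [← (hμ r).lintegral_comp (f := fun p => φ p * ψ (p + (-r) • W p)) (by fun_prop)]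
        simp only [hback]
    _ = ∫⁻ p, (∫⁻ r : ℝ, φ p * ψ (p + (-r) • W p)) ∂μ :=
        lintegral_lintegral_swap (by fun_prop)
    _ = ∫⁻ p, φ p * flowIntegral W ψ p ∂μ := by
        refine lintegral_congr fun p => ?_
        rw [lintegral_const_mul _ (by fun_prop),
          lintegral_neg_eq_self (fun r : ℝ => ψ (p + r • W p)), flowIntegral]

lemma lintegral_iteratedFlowIntegral_mul {W : ι → V → V} (hW : ∀ j, IsStraight (W j))
    (hWm : ∀ j, Measurable (W j)) {μ : Measure V} [SFinite μ]
    (hμ : ∀ j (r : ℝ), MeasurePreserving (fun p => p + r • W j p) μ μ) (J : List ι)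
    {φ ψ : V → ℝ≥0∞} (hφ : Measurable φ) (hψ : Measurable ψ) :
    ∫⁻ p, iteratedFlowIntegral W J φ p * ψ p ∂μ =
      ∫⁻ p, φ p * iteratedFlowIntegral W J.reverse ψ p ∂μ := by
  induction J generalizing φ with
  | nil => rfl
  | cons j J ih =>
    have hψJ := measurable_iteratedFlowIntegral hWm J.reverse hψ
    rw [List.reverse_cons, iteratedFlowIntegral_append]
    exact (ih (measurable_flowIntegral (hWm j) hφ)).trans
      ((hW j).lintegral_flowIntegral_mul (hWm j) (hμ j) hφ hψJ)

end Flow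

section Sobolev

variable {V : Type*} [NormedAddCommGroup V] [NormedSpace ℝ V]

lemma enorm_sq_le_lintegral_deriv {φ : ℝ → E} (hφ : ContDiff ℝ 1 φ) {a b : ℝ} (hab : a ≤ b)
    (ha : φ a = 0) :
    ‖φ b‖ₑ ^ 2 ≤ ENNReal.ofReal (b - a) * ∫⁻ r, ‖deriv φ r‖ₑ ^ 2 := by
  have hcont : Continuous (deriv φ) := hφ.continuous_deriv le_rfl
  have hftc : ‖φ b‖ₑ ≤ ∫⁻ r in Icc a b, 1 * ‖deriv φ r‖ₑ := by
    simpa [ha] using enorm_sub_le_lintegral_deriv_of_contDiffOn_Icc hφ.contDiffOn hab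
  have hCS := ENNReal.lintegral_mul_le_Lp_mul_Lq (volume.restrict (Icc a b))
    Real.HolderConjugate.two_two (f := fun _ => 1) (g := fun r => ‖deriv φ r‖ₑ)
    aemeasurable_const hcont.enorm.measurable.aemeasurable
  calc ‖φ b‖ₑ ^ 2 ≤ _ := pow_le_pow_left' (hftc.trans hCS) 2
    _ = ENNReal.ofReal (b - a) * ∫⁻ r in Icc a b, ‖deriv φ r‖ₑ ^ 2 := by
        simp [mul_pow, ← ENNReal.rpow_mul_natCast]
    _ ≤ _ := by gcongr; exact Measure.restrict_le_self

lemma IsStraight.enorm_sq_le_flowIntegral {W : V → V} (hW : IsStraight W) {F : V → E}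
    (hF : ContDiff ℝ 1 F) {L : ℝ} (hL : 0 ≤ L) {p : V} (hp : F (p + (-L) • W p) = 0) :
    ‖F p‖ₑ ^ 2 ≤ ENNReal.ofReal L * flowIntegral W (fun q => ‖fderiv ℝ F q (W q)‖ₑ ^ 2) p := by
  set γ : ℝ → V := fun r => p + r • W p
  have hγ (r : ℝ) : HasDerivAt γ (W p) r := by
    simpa [γ] using (hasDerivAt_id r).smul_const (W p)
  have hderiv (r : ℝ) : deriv (F ∘ γ) r = fderiv ℝ F (γ r) (W (γ r)) := by
    rw [hW p r]
    exact ((hF.differentiable one_ne_zero _).hasFDerivAt.comp_hasDerivAt r (hγ r)).deriv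
  have hFγ : ContDiff ℝ 1 (F ∘ γ) := hF.comp (by fun_prop)
  simpa [hderiv, γ, flowIntegral] using enorm_sq_le_lintegral_deriv hFγ (neg_nonpos.2 hL) hp

lemma IsStraight.enorm_sq_le_of_tsupport_subset {ι : Type*} [Fintype ι] {W : (ι → ℝ) → ι → ℝ}
    (hW : IsStraight W) {i : ι} (hi : ∀ p, W p i = 1) {F : (ι → ℝ) → E} (hF : ContDiff ℝ 1 F)
    {R : ℝ} (hR : tsupport F ⊆ ball 0 R) (p : ι → ℝ) :
    ‖F p‖ₑ ^ 2 ≤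
      ENNReal.ofReal (2 * R) * flowIntegral W (fun q => ‖fderiv ℝ F q (W q)‖ₑ ^ 2) p := by
  by_cases hp : p ∈ tsupport F
  · have hpi : |p i| < R := (norm_le_pi_norm p i).trans_lt (mem_ball_zero_iff.1 (hR hp))
    refine hW.enorm_sq_le_flowIntegral hF (by linarith [abs_nonneg (p i)]) ?_
    refine image_eq_zero_of_notMem_tsupport fun hq => ?_
    have hqi : |p i + -(2 * R) * W p i| < R :=
      (norm_le_pi_norm _ i).trans_lt (mem_ball_zero_iff.1 (hR hq))
    rw [hi, abs_lt] at hqi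
    linarith [(abs_lt.1 hpi).2]
  · simp [image_eq_zero_of_notMem_tsupport hp]

lemma flowIntegral_lmarginal {ι : Type*} [Finite ι] [DecidableEq ι] {W : (ι → ℝ) → ι → ℝ} {i : ι}
    {S : Finset ι} (hi : i ∉ S) (hW : ∀ p, ∀ k ∉ S, W p k = (Pi.single i 1 : ι → ℝ) k)
    {φ : (ι → ℝ) → ℝ≥0∞} (hφ : Measurable φ) :
    flowIntegral W (∫⋯∫⁻_S, φ) = ∫⋯∫⁻_insert i S, φ := by
  cases nonempty_fintype ι
  ext p
  rw [lmarginal_insert _ hφ hi, ← lintegral_add_left_eq_self _ (p i)]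
  refine lintegral_congr fun r => lmarginal_congr _ _ fun k hk => ?_
  rcases eq_or_ne k i with rfl | hki
  · simp [hW p k hk]
  · simp [hW p k hk, hki]

end Sobolev

section HorizontalFrame

/-- The underlying space of the Heisenberg group of dimension `2n + 1`. -/
abbrev Heis (n : ℕ) := Fin (2 * n + 1) → ℝ

/-- The coefficient of `∂_{2n}` in `X_j`, which is a linear function of the point: `x_{n+j}` for
`j < n` and `0` for `n ≤ j`. -/
def horizCoeff (n : ℕ) (j : Fin (2 * n)) : Heis n →L[ℝ] ℝ :=
  if h : (j : ℕ) < n then ContinuousLinearMap.proj ⟨n + j, by omega⟩ else 0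

variable {n : ℕ}

lemma Xvec_eq (j : Fin (2 * n)) (x : Heis n) :
    Xvec n j x = Pi.single j.castSucc 1 + horizCoeff n j x • Pi.single (Fin.last (2 * n)) 1 := by
  unfold Xvec horizCoeff
  split_ifs with h
  · rfl
  · simp only [zero_apply, zero_smul, add_zero]
    rfl

lemma Xvec_apply_of_ne_last (j : Fin (2 * n)) (x : Heis n) {k : Fin (2 * n + 1)}
    (hk : k ≠ Fin.last (2 * n)) : Xvec n j x k = (Pi.single j.castSucc 1 : Heis n) k := by
  simp [Xvec_eq, hk]

lemma Xvec_apply_castSucc (j : Fin (2 * n)) (x : Heis n) : Xvec n j x j.castSucc = 1 := by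
  simp [Xvec_apply_of_ne_last j x (Fin.castSucc_ne_last j)]

lemma horizCoeff_single_castSucc (j : Fin (2 * n)) :
    horizCoeff n j (Pi.single j.castSucc 1) = 0 := by
  unfold horizCoeff
  split_ifs with h
  · have hne : n ≠ 0 := by omega
    simp [Fin.ext_iff, hne]
  · rfl

lemma horizCoeff_single_last (j : Fin (2 * n)) :
    horizCoeff n j (Pi.single (Fin.last (2 * n)) 1) = 0 := by
  unfold horizCoeff
  split_ifs with h
  · have hne : n + (j : ℕ) ≠ 2 * n := by omega
    simp [Fin.ext_iff, hne]
  · rfl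

lemma isStraight_Xvec (j : Fin (2 * n)) : IsStraight (Xvec n j) := fun p r => by
  have hcoeff : horizCoeff n j (Xvec n j p) = 0 := by
    rw [Xvec_eq, map_add, map_smul, horizCoeff_single_castSucc, horizCoeff_single_last]
    simp
  rw [Xvec_eq, map_add, map_smul, hcoeff, smul_zero, add_zero, ← Xvec_eq]

lemma hasFDerivAt_Xvec (j : Fin (2 * n)) (x : Heis n) :
    HasFDerivAt (Xvec n j) ((horizCoeff n j).smulRight (Pi.single (Fin.last (2 * n)) 1)) x := by
  rw [funext (Xvec_eq j)]
  exact ((horizCoeff n j).hasFDerivAt.smul_const _).const_add _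

lemma contDiff_Xvec (j : Fin (2 * n)) : ContDiff ℝ ∞ (Xvec n j) := by
  rw [funext (Xvec_eq j)]
  fun_prop

lemma measurable_Xvec (j : Fin (2 * n)) : Measurable (Xvec n j) :=
  (contDiff_Xvec j).continuous.measurable

lemma measurePreserving_transvection {ι : Type*} [Fintype ι] (f : Module.Dual ℝ (ι → ℝ))
    {v : ι → ℝ} (hfv : f v = 0) : MeasurePreserving fun p => p + f p • v := by
  have hdet : LinearMap.det (LinearMap.transvection f v) = 1 := by
    rw [LinearMap.transvection.det, hfv, add_zero]
  refine ⟨by fun_prop, ?_⟩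
  have hmap := Real.map_linearMap_volume_pi_eq_smul_volume_pi (hdet ▸ one_ne_zero)
  rwa [hdet, inv_one, abs_one, ENNReal.ofReal_one, one_smul] at hmap

lemma measurePreserving_add_smul_Xvec (j : Fin (2 * n)) (r : ℝ) :
    MeasurePreserving fun p : Heis n => p + r • Xvec n j p := by
  have htransvection := measurePreserving_transvection (horizCoeff n j : Heis n →ₗ[ℝ] ℝ)
    (v := r • Pi.single (Fin.last (2 * n)) 1) (by simp [horizCoeff_single_last])
  have hcomp : (fun p : Heis n => p + r • Xvec n j p) = (fun p => p + r • Pi.single j.castSucc 1) ∘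
      fun p => p + horizCoeff n j p • r • Pi.single (Fin.last (2 * n)) 1 := by
    ext1 p
    simp only [Xvec_eq, Function.comp_apply]
    module
  rw [hcomp]
  exact (measurePreserving_add_right volume _).comp htransvection

lemma lieBracket_Xvec (i : Fin n) (x : Heis n) :
    VectorField.lieBracket ℝ (Xvec n ⟨n + i, by omega⟩) (Xvec n ⟨i, by omega⟩) x =
      Pi.single (Fin.last (2 * n)) 1 := by
  rw [VectorField.lieBracket_eq]
  simp [(hasFDerivAt_Xvec _ _).fderiv, horizCoeff, Xvec]

lemma T0Deriv_eq_sub (i : Fin n) {f : Heis n → E} (hf : ContDiff ℝ 2 f) (x : Heis n) :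
    T0Deriv n f x = XI n [⟨n + i, by omega⟩, ⟨i, by omega⟩] f x -
      XI n [⟨i, by omega⟩, ⟨n + i, by omega⟩] f x := by
  have hbracket := VectorField.fderiv_apply_lieBracket hf.contDiffAt (by simp)
    (hasFDerivAt_Xvec ⟨i, by omega⟩ x).differentiableAt
    (hasFDerivAt_Xvec ⟨n + i, by omega⟩ x).differentiableAt
  rwa [lieBracket_Xvec] at hbracket

lemma iteratedFlowIntegral_lmarginal {I : List (Fin (2 * n))} (hI : I.Nodup)
    {S : Finset (Fin (2 * n + 1))} (hlast : Fin.last (2 * n) ∈ S)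
    (hS : ∀ j ∈ I, j.castSucc ∉ S) {φ : Heis n → ℝ≥0∞} (hφ : Measurable φ) :
    iteratedFlowIntegral (Xvec n) I (∫⋯∫⁻_S, φ) =
      ∫⋯∫⁻_S ∪ (I.map Fin.castSucc).toFinset, φ := by
  induction I generalizing S with
  | nil => simp [iteratedFlowIntegral]
  | cons j I ih =>
    obtain ⟨hj, hI⟩ := List.nodup_cons.1 hI
    have hstep : flowIntegral (Xvec n j) (∫⋯∫⁻_S, φ) = ∫⋯∫⁻_insert j.castSucc S, φ :=
      flowIntegral_lmarginal (hS j List.mem_cons_self)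
        (fun p k hk => Xvec_apply_of_ne_last j p (ne_of_mem_of_not_mem hlast hk).symm) hφ
    have hS' : ∀ k ∈ I, k.castSucc ∉ insert j.castSucc S := fun k hk => by
      simp [ne_of_mem_of_not_mem hk hj, hS k (List.mem_cons_of_mem j hk)]
    have := ih hI (Finset.mem_insert_of_mem hlast) hS'
    rw [← hstep] at this
    refine this.trans ?_
    rw [List.map_cons, List.toFinset_cons, Finset.insert_union, Finset.union_insert]

lemma iteratedFlowIntegral_flowIntegral_reeb {I : List (Fin (2 * n))}
    (hI : I.Perm (List.finRange (2 * n))) {φ : Heis n → ℝ≥0∞} (hφ : Measurable φ) (p : Heis n) :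
    iteratedFlowIntegral (Xvec n) I
      (flowIntegral (fun _ => Pi.single (Fin.last (2 * n)) 1) φ) p = ∫⁻ q, φ q := by
  have hreeb : flowIntegral (fun _ => Pi.single (Fin.last (2 * n)) 1) φ =
      ∫⋯∫⁻_{Fin.last (2 * n)}, φ := by
    simpa using flowIntegral_lmarginal (Finset.notMem_empty (Fin.last (2 * n)))
      (fun _ _ _ => rfl) hφ
  have huniv : {Fin.last (2 * n)} ∪ (I.map Fin.castSucc).toFinset = Finset.univ := by
    ext i
    induction i using Fin.lastCases with
    | last => simp
    | cast i => simp [hI.mem_iff]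
  rw [hreeb, iteratedFlowIntegral_lmarginal (hI.nodup_iff.2 (List.nodup_finRange _))
    (Finset.mem_singleton_self _) (by simp [Fin.castSucc_ne_last]) hφ, huniv, lmarginal_univ]
  rfl

end HorizontalFrame

section HorizontalDerivatives

variable {n : ℕ} {F G : Type*} [NormedAddCommGroup F] [NormedSpace ℝ F]
  [NormedAddCommGroup G] [NormedSpace ℝ G] {U : Set (Heis n)}

lemma XI_append (I J : List (Fin (2 * n))) (f : Heis n → E) :
    XI n (I ++ J) f = XI n I (XI n J f) := by
  induction I with
  | nil => rfl
  | cons j I ih => simp only [List.cons_append, XI, ih]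

lemma contDiffOn_XI (hU : IsOpen U) {f : Heis n → E} (hf : ContDiffOn ℝ ∞ f U)
    (I : List (Fin (2 * n))) : ContDiffOn ℝ ∞ (XI n I f) U := by
  induction I with
  | nil => exact hf
  | cons j I ih =>
    exact (ih.fderiv_of_isOpen hU (m := ∞) (by simp)).clm_apply (contDiff_Xvec j).contDiffOn

lemma contDiff_XI {f : Heis n → E} (hf : ContDiff ℝ ∞ f) (I : List (Fin (2 * n))) :
    ContDiff ℝ ∞ (XI n I f) :=
  contDiffOn_univ.1 (contDiffOn_XI isOpen_univ hf.contDiffOn I)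

lemma differentiableAt_XI (hU : IsOpen U) {f : Heis n → E} (hf : ContDiffOn ℝ ∞ f U)
    (I : List (Fin (2 * n))) {x : Heis n} (hx : x ∈ U) : DifferentiableAt ℝ (XI n I f) x :=
  ((contDiffOn_XI hU hf I).contDiffAt (hU.mem_nhds hx)).differentiableAt (by simp)

lemma XI_eqOn (hU : IsOpen U) {f g : Heis n → E} (hfg : EqOn f g U) (I : List (Fin (2 * n))) :
    EqOn (XI n I f) (XI n I g) U := by
  induction I with
  | nil => exact hfg
  | cons j I ih =>
    intro x hx
    simp only [XI, hDeriv, (ih.eventuallyEq_of_mem (hU.mem_nhds hx)).fderiv_eq]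

lemma tsupport_XI_subset (f : Heis n → E) (I : List (Fin (2 * n))) :
    tsupport (XI n I f) ⊆ tsupport f := by
  induction I with
  | nil => exact subset_rfl
  | cons j I ih =>
    refine (closure_mono fun x hx => ?_).trans ((tsupport_fderiv_subset ℝ).trans ih)
    exact fun h => hx (by simp [XI, hDeriv, h])

lemma XI_add_eqOn (hU : IsOpen U) {f g : Heis n → E} (hf : ContDiffOn ℝ ∞ f U)
    (hg : ContDiffOn ℝ ∞ g U) (I : List (Fin (2 * n))) :
    EqOn (XI n I fun x => f x + g x) (fun x => XI n I f x + XI n I g x) U := by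
  induction I with
  | nil => exact fun _ _ => rfl
  | cons j I ih =>
    intro x hx
    simp only [XI, hDeriv]
    rw [(ih.eventuallyEq_of_mem (hU.mem_nhds hx)).fderiv_eq,
      fderiv_fun_add (differentiableAt_XI hU hf I hx) (differentiableAt_XI hU hg I hx), add_apply]

lemma hDeriv_bilin (B : E →L[ℝ] F →L[ℝ] G) {f : Heis n → E} {g : Heis n → F} {x : Heis n}
    (hf : DifferentiableAt ℝ f x) (hg : DifferentiableAt ℝ g x) (j : Fin (2 * n)) :
    hDeriv n j (fun y => B (f y) (g y)) x =
      B (hDeriv n j f x) (g x) + B (f x) (hDeriv n j g x) := by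
  simp [hDeriv, B.fderiv_of_bilinear hf hg, add_comm]

lemma XI_concat_bilin_eqOn (B : E →L[ℝ] F →L[ℝ] G) (hU : IsOpen U) {f : Heis n → E}
    {g : Heis n → F} (hf : ContDiffOn ℝ ∞ f U) (hg : ContDiffOn ℝ ∞ g U)
    (I : List (Fin (2 * n))) (j : Fin (2 * n)) :
    EqOn (XI n (I ++ [j]) fun x => B (f x) (g x))
      (fun x => XI n I (fun y => B (hDeriv n j f y) (g y)) x +
        XI n I (fun y => B (f y) (hDeriv n j g y)) x) U := by
  have hf' := contDiffOn_XI hU hf [j]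
  have hg' := contDiffOn_XI hU hg [j]
  have hB : ContDiff ℝ ∞ B := B.contDiff
  rw [XI_append]
  refine (XI_eqOn hU (fun y hy => ?_) I).trans
    (XI_add_eqOn hU ((hB.comp_contDiffOn hf').clm_apply hg)
      ((hB.comp_contDiffOn hf).clm_apply hg') I)
  exact hDeriv_bilin B (differentiableAt_XI hU hf [] hy) (differentiableAt_XI hU hg [] hy) j

lemma enorm_add_sq_le {A : Type*} [TopologicalSpace A] [ESeminormedAddMonoid A] (a b : A) :
    ‖a + b‖ₑ ^ 2 ≤ 2 * (‖a‖ₑ ^ 2 + ‖b‖ₑ ^ 2) :=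
  calc ‖a + b‖ₑ ^ 2 ≤ (‖a‖ₑ + ‖b‖ₑ) ^ 2 := pow_le_pow_left' (enorm_add_le _ _) 2
    _ ≤ 2 * (‖a‖ₑ ^ 2 + ‖b‖ₑ ^ 2) := by
      simpa [show (2 : ℝ) - 1 = 1 by norm_num] using
        ENNReal.rpow_add_le_mul_rpow_add_rpow ‖a‖ₑ ‖b‖ₑ one_le_two

lemma aemeasurable_enorm_XI_sq (hU : IsOpen U) {f : Heis n → E} (hf : ContDiffOn ℝ ∞ f U)
    (I : List (Fin (2 * n))) (μ : Measure (Heis n)) :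
    AEMeasurable (fun x => ‖XI n I f x‖ₑ ^ 2) (μ.restrict U) :=
  ((contDiffOn_XI hU hf I).continuousOn.enorm.aemeasurable hU.measurableSet).pow_const 2

/-- Instead of expanding `X_I B(f, g)`, peel off the innermost derivative of `I` and let it fall on
`f` or on `g`. -/
lemma setLIntegral_enorm_XI_bilin_le (B : E →L[ℝ] F →L[ℝ] G) (hU : IsOpen U)
    {f : Heis n → E} {g : Heis n → F} (hf : ContDiffOn ℝ ∞ f U) (hg : ContDiffOn ℝ ∞ g U)
    (μ : Measure (Heis n)) (I : List (Fin (2 * n))) {c : ℝ≥0∞}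
    (hc : ∀ J K : List (Fin (2 * n)), J.length + K.length = I.length →
      ∫⁻ x in U, ‖XI n J f x‖ₑ ^ 2 * ‖XI n K g x‖ₑ ^ 2 ∂μ ≤ c) :
    ∫⁻ x in U, ‖XI n I (fun y => B (f y) (g y)) x‖ₑ ^ 2 ∂μ ≤ 4 ^ I.length * (‖B‖ₑ ^ 2 * c) := by
  induction I using List.reverseRecOn generalizing f g with
  | nil =>
    calc ∫⁻ x in U, ‖B (f x) (g x)‖ₑ ^ 2 ∂μ
        ≤ ∫⁻ x in U, ‖B‖ₑ ^ 2 * (‖f x‖ₑ ^ 2 * ‖g x‖ₑ ^ 2) ∂μ := lintegral_mono fun x => by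
          rw [← mul_pow, ← mul_pow, ← mul_assoc]
          exact pow_le_pow_left' (B.le_opENorm₂ _ _) 2
      _ = ‖B‖ₑ ^ 2 * ∫⁻ x in U, ‖f x‖ₑ ^ 2 * ‖g x‖ₑ ^ 2 ∂μ :=
          lintegral_const_mul' _ _ (by finiteness)
      _ ≤ 4 ^ ([] : List (Fin (2 * n))).length * (‖B‖ₑ ^ 2 * c) := by
          rw [List.length_nil, pow_zero, one_mul]
          gcongr
          exact hc [] [] rfl
  | append_singleton I j ih =>
    have hf' := contDiffOn_XI hU hf [j]
    have hg' := contDiffOn_XI hU hg [j]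
    have hleft := ih hf' hg fun J K h => by
      rw [← XI_append]
      exact hc (J ++ [j]) K (by simp only [List.length_append]; omega)
    have hright := ih hf hg' fun J K h => by
      rw [← XI_append]
      exact hc J (K ++ [j]) (by simp only [List.length_append]; omega)
    have hfg' : ContDiffOn ℝ ∞ (fun y => B (hDeriv n j f y) (g y)) U :=
      (B.contDiff.comp_contDiffOn hf').clm_apply hg
    calc ∫⁻ x in U, ‖XI n (I ++ [j]) (fun y => B (f y) (g y)) x‖ₑ ^ 2 ∂μ
        ≤ ∫⁻ x in U, 2 * (‖XI n I (fun y => B (hDeriv n j f y) (g y)) x‖ₑ ^ 2 +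
            ‖XI n I (fun y => B (f y) (hDeriv n j g y)) x‖ₑ ^ 2) ∂μ := by
          refine setLIntegral_mono' hU.measurableSet fun x hx => ?_
          rw [XI_concat_bilin_eqOn B hU hf hg I j hx]
          exact enorm_add_sq_le _ _
      _ ≤ 2 * (4 ^ I.length * (‖B‖ₑ ^ 2 * c) + 4 ^ I.length * (‖B‖ₑ ^ 2 * c)) := by
          rw [lintegral_const_mul' _ _ ENNReal.ofNat_ne_top,
            lintegral_add_left' (aemeasurable_enorm_XI_sq hU hfg' I μ)]
          gcongr
          · exact hleft
          · exact hright
      _ = 4 ^ (I ++ [j]).length * (‖B‖ₑ ^ 2 * c) := by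
          rw [List.length_append, List.length_singleton, pow_succ]
          ring

end HorizontalDerivatives

section EnergyDensity

variable {n : ℕ} {F G : Type*} [NormedAddCommGroup F] [NormedSpace ℝ F]
  [NormedAddCommGroup G] [NormedSpace ℝ G] {U : Set (Heis n)}

/-- The multi-indices `I` with `|I| ≤ s`. -/
def multiIndices (n s : ℕ) : Finset (List (Fin (2 * n))) :=
  (List.finite_length_le (Fin (2 * n)) s).toFinset

/-- The density `Σ_{|I| ≤ s} ‖X_I f‖²` of the squared Folland–Stein norm, with values in `ℝ≥0∞` so
that it can be integrated whether or not the norm is finite. -/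
def energyDensity (n s : ℕ) (f : Heis n → E) (x : Heis n) : ℝ≥0∞ :=
  ∑ I ∈ multiIndices n s, ‖XI n I f x‖ₑ ^ 2

lemma mem_multiIndices {s : ℕ} {I : List (Fin (2 * n))} :
    I ∈ multiIndices n s ↔ I.length ≤ s := by
  simp [multiIndices]

lemma sum_multiIndices {M : Type*} [AddCommMonoid M] (s : ℕ) (a : List (Fin (2 * n)) → M) :
    ∑ I ∈ multiIndices n s, a I =
      ∑ t ∈ Finset.range (s + 1), ∑ I : Fin t → Fin (2 * n), a (List.ofFn I) := by
  rw [Finset.sum_sigma']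
  refine (Finset.sum_nbij' (fun I => List.ofFn I.2) (fun I => ⟨I.length, I.get⟩)
    ?_ ?_ ?_ ?_ ?_).symm
  · simp [mem_multiIndices]
  · simp [mem_multiIndices]
  · exact fun I _ => List.equivSigmaTuple.apply_symm_apply I
  · exact fun I _ => List.ofFn_get I
  · exact fun _ _ => rfl

lemma enorm_XI_sq_le_energyDensity {s : ℕ} {I : List (Fin (2 * n))} (hI : I.length ≤ s)
    (f : Heis n → E) (x : Heis n) : ‖XI n I f x‖ₑ ^ 2 ≤ energyDensity n s f x :=
  Finset.single_le_sum (f := fun I => ‖XI n I f x‖ₑ ^ 2) (fun _ _ => zero_le)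
    (mem_multiIndices.2 hI)

lemma energyDensity_eqOn (hU : IsOpen U) {f g : Heis n → E} (hfg : EqOn f g U) (s : ℕ) :
    EqOn (energyDensity n s f) (energyDensity n s g) U := fun x hx =>
  Finset.sum_congr rfl fun I _ => by rw [XI_eqOn hU hfg I hx]

lemma support_energyDensity_subset (s : ℕ) (f : Heis n → E) :
    Function.support (energyDensity n s f) ⊆ tsupport f := by
  refine fun x hx => by_contra fun hxf => hx (Finset.sum_eq_zero fun I _ => ?_)
  simp [image_eq_zero_of_notMem_tsupport fun h => hxf (tsupport_XI_subset f I h)]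

lemma lintegral_energyDensity {s : ℕ} {f : Heis n → E} {μ : Measure (Heis n)}
    (hf : ∀ I, AEMeasurable (fun x => ‖XI n I f x‖ₑ ^ 2) μ) :
    ∫⁻ x, energyDensity n s f x ∂μ = ∑ I ∈ multiIndices n s, ∫⁻ x, ‖XI n I f x‖ₑ ^ 2 ∂μ :=
  lintegral_finsetSum' _ fun I _ => hf I

lemma exists_setLIntegral_energyDensity_bilin_le (B : E →L[ℝ] F →L[ℝ] G) (k : ℕ) :
    ∃ C : ℝ≥0, ∀ U : Set (Heis n), IsOpen U → ∀ (f : Heis n → E) (g : Heis n → F),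
      ContDiffOn ℝ ∞ f U → ContDiffOn ℝ ∞ g U → ∀ (μ : Measure (Heis n)) (c : ℝ≥0∞),
      (∀ J K : List (Fin (2 * n)), J.length + K.length ≤ k →
        ∫⁻ x in U, ‖XI n J f x‖ₑ ^ 2 * ‖XI n K g x‖ₑ ^ 2 ∂μ ≤ c) →
      ∫⁻ x in U, energyDensity n k (fun y => B (f y) (g y)) x ∂μ ≤ C * c := by
  refine ⟨(multiIndices n k).card * (4 ^ k * ‖B‖₊ ^ 2), fun U hU f g hf hg μ c hc => ?_⟩
  have hterm : ∀ I ∈ multiIndices n k,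
      ∫⁻ x in U, ‖XI n I (fun y => B (f y) (g y)) x‖ₑ ^ 2 ∂μ ≤ 4 ^ k * (‖B‖ₑ ^ 2 * c) := by
    intro I hI
    have hIk := mem_multiIndices.1 hI
    refine (setLIntegral_enorm_XI_bilin_le B hU hf hg μ I fun J K h => hc J K (h ▸ hIk)).trans ?_
    gcongr
    norm_num
  have hfg : ContDiffOn ℝ ∞ (fun y => B (f y) (g y)) U :=
    (B.contDiff.comp_contDiffOn hf).clm_apply hg
  rw [lintegral_energyDensity fun I => aemeasurable_enorm_XI_sq hU hfg I μ]
  refine (Finset.sum_le_card_nsmul _ _ _ hterm).trans_eq ?_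
  push_cast
  rw [nsmul_eq_mul, mul_assoc, mul_assoc]
  rfl

end EnergyDensity

section CompactSupport

variable {n : ℕ} {F G : Type*} [NormedAddCommGroup F] [NormedSpace ℝ F]
  [NormedAddCommGroup G] [NormedSpace ℝ G] {u : Heis n → E} {v : Heis n → F} {R : ℝ}

lemma contDiff_T0Deriv (hu : ContDiff ℝ ∞ u) : ContDiff ℝ ∞ (T0Deriv n u) :=
  (hu.fderiv_right (m := ∞) (by simp)).clm_apply contDiff_const

lemma enorm_sq_le_iteratedFlowIntegral_XI (hu : ContDiff ℝ ∞ u) (hR : tsupport u ⊆ ball 0 R)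
    (I : List (Fin (2 * n))) (p : Heis n) :
    ‖u p‖ₑ ^ 2 ≤ ENNReal.ofReal (2 * R) ^ I.length *
      iteratedFlowIntegral (Xvec n) I (fun q => ‖XI n I u q‖ₑ ^ 2) p := by
  induction I with
  | nil => simp [iteratedFlowIntegral, XI]
  | cons j I ih =>
    have hstep : (fun q => ‖XI n I u q‖ₑ ^ 2) ≤ fun q => ((2 * R).toNNReal : ℝ≥0∞) *
        flowIntegral (Xvec n j) (fun q => ‖XI n (j :: I) u q‖ₑ ^ 2) q :=
      (isStraight_Xvec j).enorm_sq_le_of_tsupport_subset (Xvec_apply_castSucc j)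
        ((contDiff_XI hu I).of_le (by simp)) ((tsupport_XI_subset u I).trans hR)
    have hmono := iteratedFlowIntegral_mono (Xvec n) I hstep p
    rw [iteratedFlowIntegral_const_mul] at hmono
    rw [List.length_cons, pow_succ (ENNReal.ofReal _), mul_assoc]
    exact ih.trans (mul_le_mul_right hmono _)

lemma iteratedFlowIntegral_enorm_sq_le (hu : ContDiff ℝ ∞ u) (hR : tsupport u ⊆ ball 0 R)
    {I : List (Fin (2 * n))} (hI : I.Perm (List.finRange (2 * n))) (p : Heis n) :
    iteratedFlowIntegral (Xvec n) I (fun q => ‖u q‖ₑ ^ 2) p ≤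
      ENNReal.ofReal (2 * R) * ∫⁻ q, ‖T0Deriv n u q‖ₑ ^ 2 := by
  have hreeb : (fun q => ‖u q‖ₑ ^ 2) ≤ fun q => ((2 * R).toNNReal : ℝ≥0∞) *
      flowIntegral (fun _ => Pi.single (Fin.last (2 * n)) 1) (fun q => ‖T0Deriv n u q‖ₑ ^ 2) q :=
    IsStraight.enorm_sq_le_of_tsupport_subset (fun _ _ => rfl) (fun _ => Pi.single_eq_same _ _)
      (hu.of_le (by simp)) hR
  refine (iteratedFlowIntegral_mono (Xvec n) I hreeb p).trans_eq ?_
  rw [iteratedFlowIntegral_const_mul]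
  beta_reduce
  rw [iteratedFlowIntegral_flowIntegral_reeb hI
    ((contDiff_T0Deriv hu).continuous.enorm.measurable.pow_const 2)]
  rfl

/-- Distribute the `2n + 1` directions over the two factors: `I` and the Reeb direction go to `u`,
`J` goes to `v`, and self-adjointness of the flow integrals brings the latter back to `u`. -/
lemma lintegral_enorm_sq_mul_le (hu : ContDiff ℝ ∞ u) (huR : tsupport u ⊆ ball 0 R)
    (hv : ContDiff ℝ ∞ v) (hvR : tsupport v ⊆ ball 0 R) {I J : List (Fin (2 * n))}
    (hIJ : (I ++ J.reverse).Perm (List.finRange (2 * n))) :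
    ∫⁻ p, ‖u p‖ₑ ^ 2 * ‖v p‖ₑ ^ 2 ≤ ENNReal.ofReal (2 * R) ^ (2 * n + 1) *
      ((∫⁻ p, ‖T0Deriv n (XI n I u) p‖ₑ ^ 2) * ∫⁻ p, ‖XI n J v p‖ₑ ^ 2) := by
  set c := ENNReal.ofReal (2 * R)
  have hc (m : ℕ) : c ^ m ≠ ⊤ := by finiteness
  set φ : Heis n → ℝ≥0∞ := fun p => ‖XI n I u p‖ₑ ^ 2
  set ψ : Heis n → ℝ≥0∞ := fun p => ‖XI n J v p‖ₑ ^ 2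
  have hφ : Measurable φ := (contDiff_XI hu I).continuous.enorm.measurable.pow_const 2
  have hψ : Measurable ψ := (contDiff_XI hv J).continuous.enorm.measurable.pow_const 2
  have hpow : c ^ (2 * n) = c ^ I.length * c ^ J.length := by
    rw [← pow_add, show I.length + J.length = 2 * n by simpa using hIJ.length_eq]
  calc ∫⁻ p, ‖u p‖ₑ ^ 2 * ‖v p‖ₑ ^ 2
      ≤ ∫⁻ p, c ^ (2 * n) *
          (iteratedFlowIntegral (Xvec n) J ψ p * iteratedFlowIntegral (Xvec n) I φ p) := by
        refine lintegral_mono fun p => (mul_le_mul'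
          (enorm_sq_le_iteratedFlowIntegral_XI hu huR I p)
          (enorm_sq_le_iteratedFlowIntegral_XI hv hvR J p)).trans_eq ?_
        rw [hpow]
        ring
    _ = c ^ (2 * n) * ∫⁻ p, ψ p * iteratedFlowIntegral (Xvec n) (I ++ J.reverse) φ p := by
        rw [lintegral_const_mul' _ _ (hc _), iteratedFlowIntegral_append,
          lintegral_iteratedFlowIntegral_mul isStraight_Xvec measurable_Xvec
            measurePreserving_add_smul_Xvec J hψ
            (measurable_iteratedFlowIntegral measurable_Xvec I hφ)]
    _ ≤ c ^ (2 * n) * ∫⁻ p, ψ p * (c * ∫⁻ q, ‖T0Deriv n (XI n I u) q‖ₑ ^ 2) := by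
        gcongr with p
        exact iteratedFlowIntegral_enorm_sq_le (contDiff_XI hu I)
          ((tsupport_XI_subset u I).trans huR) hIJ p
    _ = c ^ (2 * n + 1) * ((∫⁻ p, ‖T0Deriv n (XI n I u) p‖ₑ ^ 2) * ∫⁻ p, ψ p) := by
        rw [lintegral_mul_const _ hψ, pow_succ]
        ring

lemma enorm_T0Deriv_XI_sq_le (hn : 1 ≤ n) (hu : ContDiff ℝ ∞ u) {s : ℕ} {I : List (Fin (2 * n))}
    (hI : I.length + 2 ≤ s) (p : Heis n) :
    ‖T0Deriv n (XI n I u) p‖ₑ ^ 2 ≤ 4 * energyDensity n s u p := by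
  have hXX (i j : Fin (2 * n)) : ‖XI n [i, j] (XI n I u) p‖ₑ ^ 2 ≤ energyDensity n s u p := by
    rw [← XI_append]
    exact enorm_XI_sq_le_energyDensity ((List.length_append.trans (add_comm _ _)).trans_le hI) u p
  rw [T0Deriv_eq_sub ⟨0, hn⟩ (contDiff_infty.1 (contDiff_XI hu I) 2), sub_eq_add_neg]
  refine (enorm_add_sq_le _ _).trans ?_
  rw [enorm_neg, show (4 : ℝ≥0∞) = 2 * 2 by norm_num, mul_assoc, two_mul (energyDensity n s u p)]
  gcongr
  · exact hXX _ _
  · exact hXX _ _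

/-- `m` is the number of horizontal directions that are charged to `v`. -/
lemma lintegral_enorm_XI_sq_mul_le_of_split (hn : 1 ≤ n) (hu : ContDiff ℝ ∞ u)
    (huR : tsupport u ⊆ ball 0 R) (hv : ContDiff ℝ ∞ v) (hvR : tsupport v ⊆ ball 0 R)
    {s k m : ℕ} (hm : m ≤ 2 * n) {A B : List (Fin (2 * n))}
    (hA : A.length + (2 * n - m) + 2 ≤ s) (hB : B.length + m ≤ k) :
    ∫⁻ p, ‖XI n A u p‖ₑ ^ 2 * ‖XI n B v p‖ₑ ^ 2 ≤ ENNReal.ofReal (2 * R) ^ (2 * n + 1) * 4 *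
      ((∫⁻ p, energyDensity n s u p) * ∫⁻ p, energyDensity n k v p) := by
  set J := (List.finRange (2 * n)).take m with hJ
  set I := (List.finRange (2 * n)).drop m with hI
  have hIJ : (I ++ J.reverse).Perm (List.finRange (2 * n)) := by
    refine List.perm_append_comm.trans (((List.reverse_perm J).append_right I).trans ?_)
    rw [List.take_append_drop]
  have hu_energy : ∫⁻ p, ‖T0Deriv n (XI n I (XI n A u)) p‖ₑ ^ 2 ≤
      4 * ∫⁻ p, energyDensity n s u p := by
    rw [← lintegral_const_mul' _ _ ENNReal.ofNat_ne_top, ← XI_append]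
    exact lintegral_mono (enorm_T0Deriv_XI_sq_le hn hu (by simp [hI]; omega))
  have hv_energy : ∫⁻ p, ‖XI n J (XI n B v) p‖ₑ ^ 2 ≤ ∫⁻ p, energyDensity n k v p := by
    rw [← XI_append]
    exact lintegral_mono (enorm_XI_sq_le_energyDensity (by simp [hJ]; omega) v)
  refine (lintegral_enorm_sq_mul_le (contDiff_XI hu A) ((tsupport_XI_subset u A).trans huR)
    (contDiff_XI hv B) ((tsupport_XI_subset v B).trans hvR) hIJ).trans ?_
  rw [mul_assoc, ← mul_assoc 4]
  gcongr

lemma lintegral_enorm_XI_sq_mul_le (hn : 1 ≤ n) (hu : ContDiff ℝ ∞ u)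
    (huR : tsupport u ⊆ ball 0 R) (hv : ContDiff ℝ ∞ v) (hvR : tsupport v ⊆ ball 0 R)
    {s k : ℕ} (hs : 2 * n + 2 ≤ s) (hk : k ≤ s) {A B : List (Fin (2 * n))}
    (hAB : A.length + B.length ≤ k) :
    ∫⁻ p, ‖XI n A u p‖ₑ ^ 2 * ‖XI n B v p‖ₑ ^ 2 ≤ ENNReal.ofReal (2 * R) ^ (2 * n + 1) * 4 *
      ((∫⁻ p, energyDensity n s u p) * ∫⁻ p, energyDensity n k v p) := by
  rcases le_total (k - B.length) (s - A.length) with h | h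
  · exact lintegral_enorm_XI_sq_mul_le_of_split hn hu huR hv hvR
      (m := min (k - B.length) (2 * n)) (by omega) (by omega) (by omega)
  · simpa only [mul_comm] using lintegral_enorm_XI_sq_mul_le_of_split hn hv hvR hu huR
      (m := min (s - A.length) (2 * n)) (s := k) (k := s) (A := B) (B := A)
      (by omega) (by omega) (by omega)

lemma exists_lintegral_energyDensity_bilin_le (B : E →L[ℝ] F →L[ℝ] G) (hn : 1 ≤ n) {s k : ℕ}
    (hs : 2 * n + 2 ≤ s) (hk : k ≤ s) (R : ℝ) :
    ∃ C : ℝ≥0, ∀ (u : Heis n → E) (v : Heis n → F), ContDiff ℝ ∞ u → ContDiff ℝ ∞ v →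
      tsupport u ⊆ ball 0 R → tsupport v ⊆ ball 0 R →
      ∫⁻ x, energyDensity n k (fun y => B (u y) (v y)) x ≤
        C * ((∫⁻ x, energyDensity n s u x) * ∫⁻ x, energyDensity n k v x) := by
  obtain ⟨C, hC⟩ := exists_setLIntegral_energyDensity_bilin_le (n := n) B k
  refine ⟨C * ((2 * R).toNNReal ^ (2 * n + 1) * 4), fun u v hu hv huR hvR => ?_⟩
  have hproduct := hC univ isOpen_univ u v hu.contDiffOn hv.contDiffOn volume _ fun J K hJK => by
    rw [setLIntegral_univ]
    exact lintegral_enorm_XI_sq_mul_le hn hu huR hv hvR hs hk hJK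
  rw [setLIntegral_univ, ← mul_assoc] at hproduct
  exact_mod_cast hproduct

end CompactSupport

section Cutoff

variable {n : ℕ} {F G : Type*} [NormedAddCommGroup F] [NormedSpace ℝ F]
  [NormedAddCommGroup G] [NormedSpace ℝ G] {D : Set (Heis n)} {χ : Heis n → ℝ}

lemma exists_contDiff_cutoff {V : Type*} [NormedAddCommGroup V] [NormedSpace ℝ V]
    [FiniteDimensional ℝ V] {K U : Set V} (hK : IsCompact K) (hU : IsOpen U) (hKU : K ⊆ U) :
    ∃ χ : V → ℝ, ContDiff ℝ ∞ χ ∧ HasCompactSupport χ ∧ tsupport χ ⊆ U ∧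
      ∀ᶠ x in 𝓝ˢ K, χ x = 1 := by
  obtain ⟨W, hW, hKW, hWU, hWc⟩ := exists_open_between_and_isCompact_closure hK hU hKU
  obtain ⟨χ, hχ1, hχ0, -⟩ := exists_contMDiffMap_one_nhds_of_subset_interior (n := ⊤)
    (modelWithCornersSelf ℝ V) hK.isClosed (hW.interior_eq.symm ▸ hKW)
  have hsupp : tsupport χ ⊆ closure W :=
    closure_mono fun x hx => by_contra fun hxW => hx (hχ0 x hxW)
  exact ⟨χ, χ.contMDiff.contDiff, hWc.of_isClosed_subset (isClosed_tsupport _) hsupp,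
    hsupp.trans hWU, hχ1⟩

lemma contDiff_smul_of_tsupport_subset (hD : IsOpen D) (hχ : ContDiff ℝ ∞ χ)
    (hχD : tsupport χ ⊆ D) {f : Heis n → E} (hf : ContDiffOn ℝ ∞ f D) :
    ContDiff ℝ ∞ fun x => χ x • f x := by
  refine (contMDiff_of_tsupport fun x hx => ContDiffAt.contMDiffAt ?_).contDiff
  have hxD : x ∈ D := hχD (tsupport_smul_subset_left χ f hx)
  exact hχ.contDiffAt.smul (hf.contDiffAt (hD.mem_nhds hxD))

lemma exists_energyDensity_le {f : Heis n → E} (hf : ContDiff ℝ ∞ f) (hfc : HasCompactSupport f)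
    (s : ℕ) : ∃ M : ℝ≥0, ∀ x, energyDensity n s f x ≤ M := by
  have hbound (I : List (Fin (2 * n))) : ∃ M : ℝ≥0, ∀ x, ‖XI n I f x‖₊ ≤ M := by
    have hIc : HasCompactSupport (XI n I f) :=
      hfc.of_isClosed_subset (isClosed_tsupport _) (tsupport_XI_subset f I)
    obtain ⟨M, hM⟩ := hIc.exists_bound_of_continuous (contDiff_XI hf I).continuous
    exact ⟨M.toNNReal, fun x => NNReal.le_toNNReal_of_coe_le (hM x)⟩
  choose M hM using hbound
  refine ⟨∑ I ∈ multiIndices n s, M I ^ 2, fun x => ?_⟩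
  push_cast
  exact Finset.sum_le_sum fun I _ => pow_le_pow_left' (ENNReal.coe_le_coe.2 (hM I x)) 2

lemma exists_lintegral_energyDensity_smul_le (hD : IsOpen D) (hχ : ContDiff ℝ ∞ χ)
    (hχc : HasCompactSupport χ) (hχD : tsupport χ ⊆ D) (s : ℕ) :
    ∃ C : ℝ≥0, ∀ f : Heis n → E, ContDiffOn ℝ ∞ f D →
      ∫⁻ x, energyDensity n s (fun y => χ y • f y) x ≤ C * ∫⁻ x in D, energyDensity n s f x := by
  obtain ⟨M, hM⟩ := exists_energyDensity_le hχ hχc s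
  obtain ⟨C, hC⟩ := exists_setLIntegral_energyDensity_bilin_le (n := n)
    (ContinuousLinearMap.lsmul ℝ ℝ : ℝ →L[ℝ] E →L[ℝ] E) s
  refine ⟨C * M, fun f hf => ?_⟩
  have hsupp : Function.support (energyDensity n s fun y => χ y • f y) ⊆ D :=
    (support_energyDensity_subset s _).trans ((tsupport_smul_subset_left χ f).trans hχD)
  rw [← setLIntegral_eq_of_support_subset hsupp, ENNReal.coe_mul, mul_assoc]
  refine hC D hD χ f hχ.contDiffOn hf volume _ fun J K hJK => ?_
  rw [← lintegral_const_mul' _ _ ENNReal.coe_ne_top]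
  exact lintegral_mono fun x => mul_le_mul'
    ((enorm_XI_sq_le_energyDensity (by omega) χ x).trans (hM x))
    (enorm_XI_sq_le_energyDensity (by omega) f x)

lemma exists_setLIntegral_energyDensity_bilin_le_mul (B : E →L[ℝ] F →L[ℝ] G) (hn : 1 ≤ n)
    {s k : ℕ} (hs : 2 * n + 2 ≤ s) (hk : k ≤ s) (hD : IsOpen D) {K : Set (Heis n)}
    (hK : IsCompact K) (hKD : K ⊆ D) :
    ∃ C : ℝ≥0, ∀ (f : Heis n → E) (g : Heis n → F), ContDiffOn ℝ ∞ f D → ContDiffOn ℝ ∞ g D →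
      ∫⁻ x in K, energyDensity n k (fun y => B (f y) (g y)) x ≤
        C * ((∫⁻ x in D, energyDensity n s f x) * ∫⁻ x in D, energyDensity n k g x) := by
  obtain ⟨χ, hχ, hχc, hχD, hχ1⟩ := exists_contDiff_cutoff hK hD hKD
  obtain ⟨W, hW, hKW, hχW⟩ := eventually_nhdsSet_iff_exists.1 hχ1
  obtain ⟨R, hR⟩ : ∃ R, tsupport χ ⊆ ball 0 R := hχc.isBounded.subset_ball 0
  obtain ⟨C₀, hC₀⟩ := exists_lintegral_energyDensity_bilin_le B hn hs hk R
  obtain ⟨C₁, hC₁⟩ := exists_lintegral_energyDensity_smul_le (E := E) hD hχ hχc hχD s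
  obtain ⟨C₂, hC₂⟩ := exists_lintegral_energyDensity_smul_le (E := F) hD hχ hχc hχD k
  refine ⟨C₀ * (C₁ * C₂), fun f g hf hg => ?_⟩
  have hcut : EqOn (fun y => B (f y) (g y)) (fun y => B (χ y • f y) (χ y • g y)) W :=
    fun y hy => by simp [hχW y hy]
  calc ∫⁻ x in K, energyDensity n k (fun y => B (f y) (g y)) x
      = ∫⁻ x in K, energyDensity n k (fun y => B (χ y • f y) (χ y • g y)) x :=
        setLIntegral_congr_fun hK.measurableSet ((energyDensity_eqOn hW hcut k).mono hKW)
    _ ≤ ∫⁻ x, energyDensity n k (fun y => B (χ y • f y) (χ y • g y)) x :=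
        setLIntegral_le_lintegral _ _
    _ ≤ C₀ * ((∫⁻ x, energyDensity n s (fun y => χ y • f y) x) *
          ∫⁻ x, energyDensity n k (fun y => χ y • g y) x) :=
        hC₀ _ _ (contDiff_smul_of_tsupport_subset hD hχ hχD hf)
          (contDiff_smul_of_tsupport_subset hD hχ hχD hg)
          ((tsupport_smul_subset_left χ f).trans hR) ((tsupport_smul_subset_left χ g).trans hR)
    _ ≤ C₀ * ((C₁ * ∫⁻ x in D, energyDensity n s f x) *
          (C₂ * ∫⁻ x in D, energyDensity n k g x)) := by
        gcongr
        · exact hC₁ f hf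
        · exact hC₂ g hg
    _ = _ := by push_cast; ring

end Cutoff

section SmoothUpToClosure

variable {n : ℕ} {D U : Set (Heis n)} {f : Heis n → E}

lemma exists_contDiffWithinAt_eventuallyEq_fderiv {V : Type*} [NormedAddCommGroup V]
    [NormedSpace ℝ V] {D : Set V} (hD : IsOpen D) {f g : V → E} {x : V} (hx : x ∈ closure D)
    {m : ℕ} (hg : ContDiffWithinAt ℝ (m + 1) g (closure D) x) (hfg : f =ᶠ[𝓝[D] x] g) :
    ∃ g' : V → V →L[ℝ] E, ContDiffWithinAt ℝ m g' (closure D) x ∧ fderiv ℝ f =ᶠ[𝓝[D] x] g' := by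
  obtain ⟨u, hu, -, -, g', hg', hg'm⟩ :=
    (contDiffWithinAt_succ_iff_hasFDerivWithinAt' (by simp)).1 hg
  rw [insert_eq_of_mem hx] at hu
  refine ⟨g', hg'm, ?_⟩
  filter_upwards [nhdsWithin_mono x subset_closure hu, eventually_eventually_nhdsWithin.2 hfg,
    self_mem_nhdsWithin] with y hyu hfgy hyD
  have hDy : D ∈ 𝓝 y := hD.mem_nhds hyD
  rw [nhdsWithin_eq_nhds.2 hDy] at hfgy
  exact (((hg' y hyu).hasFDerivAt (mem_of_superset hDy subset_closure)).congr_of_eventuallyEq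
    hfgy).fderiv

/-- `closure D` need not have unique derivatives, so `X_I f` is compared on `D` with the derivatives
of a Taylor series of `f` at each boundary point. -/
lemma exists_contDiffWithinAt_eventuallyEq_XI (hD : IsOpen D)
    (hf : ContDiffOn ℝ ∞ f (closure D)) (I : List (Fin (2 * n))) {x : Heis n}
    (hx : x ∈ closure D) (m : ℕ) :
    ∃ g : Heis n → E, ContDiffWithinAt ℝ m g (closure D) x ∧ XI n I f =ᶠ[𝓝[D] x] g := by
  induction I generalizing m with
  | nil => exact ⟨f, contDiffWithinAt_infty.1 (hf x hx) m, EventuallyEq.rfl⟩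
  | cons j I ih =>
    obtain ⟨g, hg, hfg⟩ := ih (m + 1)
    obtain ⟨g', hg', hfg'⟩ := exists_contDiffWithinAt_eventuallyEq_fderiv hD hx hg hfg
    refine ⟨fun y => g' y (Xvec n j y), hg'.clm_apply
      (contDiff_infty.1 (contDiff_Xvec j) m).contDiffWithinAt, ?_⟩
    filter_upwards [hfg'] with y hy
    rw [XI, hDeriv, hy]

lemma exists_tendsto_XI (hD : IsOpen D) (hf : ContDiffOn ℝ ∞ f (closure D))
    (I : List (Fin (2 * n))) {x : Heis n} (hx : x ∈ closure D) :
    ∃ y, Tendsto (XI n I f) (𝓝[D] x) (𝓝 y) := by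
  obtain ⟨g, hg, hfg⟩ := exists_contDiffWithinAt_eventuallyEq_XI hD hf I hx 0
  exact ⟨g x, ((hg.continuousWithinAt.mono subset_closure).tendsto).congr' hfg.symm⟩

lemma integrableOn_of_exists_tendsto {X : Type*} [MetricSpace X] [ProperSpace X]
    [MeasurableSpace X] [BorelSpace X] {μ : Measure X} [IsFiniteMeasureOnCompacts μ] {D : Set X}
    {A : Type*} [NormedAddCommGroup A] (hD : IsOpen D) (hDb : IsBounded D)
    {h : X → A} (hc : ContinuousOn h D)
    (hh : ∀ x ∈ closure D, ∃ y, Tendsto h (𝓝[D] x) (𝓝 y)) : IntegrableOn h D μ :=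
  (((continuousOn_extendFrom subset_rfl hh).integrableOn_compact hDb.isCompact_closure).mono_set
    subset_closure).congr_fun (extendFrom_extends hc) hD.measurableSet

lemma integrableOn_norm_XI_sq (hD : IsOpen D) (hDb : IsBounded D)
    (hf : ContDiffOn ℝ ∞ f (closure D)) (I : List (Fin (2 * n))) :
    IntegrableOn (fun x => ‖XI n I f x‖ ^ 2) D := by
  refine integrableOn_of_exists_tendsto hD hDb
    ((contDiffOn_XI hD (hf.mono subset_closure) I).continuousOn.norm.pow 2) fun x hx => ?_
  obtain ⟨y, hy⟩ := exists_tendsto_XI hD hf I hx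
  exact ⟨‖y‖ ^ 2, hy.norm.pow 2⟩

lemma fsNormSq_nonneg (s : ℕ) (U : Set (Heis n)) (f : Heis n → E) : 0 ≤ fsNormSq n U s f :=
  Finset.sum_nonneg fun _ _ => Finset.sum_nonneg fun _ _ => integral_nonneg fun _ => by positivity

lemma ofReal_fsNormSq (hD : IsOpen D) (hDb : IsBounded D) (hf : ContDiffOn ℝ ∞ f (closure D))
    (hU : U ⊆ D) (s : ℕ) :
    ENNReal.ofReal (fsNormSq n U s f) = ∫⁻ x in U, energyDensity n s f x := by
  have hterm (I : List (Fin (2 * n))) :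
      ENNReal.ofReal (∫ x in U, ‖XI n I f x‖ ^ 2) = ∫⁻ x in U, ‖XI n I f x‖ₑ ^ 2 := by
    rw [ofReal_integral_eq_lintegral_ofReal ((integrableOn_norm_XI_sq hD hDb hf I).mono_set hU)
      (ae_of_all _ fun _ => by positivity)]
    simp only [ENNReal.ofReal_pow (norm_nonneg _), ofReal_norm]
  have hmeas (I : List (Fin (2 * n))) :
      AEMeasurable (fun x => ‖XI n I f x‖ₑ ^ 2) (volume.restrict U) :=
    (aemeasurable_enorm_XI_sq hD (hf.mono subset_closure) I volume).mono_measure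
      (Measure.restrict_mono_set volume hU)
  rw [lintegral_energyDensity hmeas, ← Finset.sum_congr rfl fun I _ => hterm I,
    ← ENNReal.ofReal_sum_of_nonneg fun I _ => integral_nonneg fun _ => by positivity, fsNormSq,
    sum_multiIndices]

end SmoothUpToClosure

theorem statement3_general {F G : Type*} [NormedAddCommGroup F] [NormedSpace ℝ F]
    [NormedAddCommGroup G] [NormedSpace ℝ G] (B : E →L[ℝ] F →L[ℝ] G) (n s k : ℕ) (hn : 1 ≤ n)
    (hs : 2 * n + 2 ≤ s) (hk : k ≤ s) (D D' : Set (Heis n)) (hD : IsOpen D) (hDb : IsBounded D)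
    (hsub : closure D' ⊆ D) :
    ∃ C > (0 : ℝ), ∀ (f : Heis n → E) (g : Heis n → F),
      ContDiffOn ℝ ∞ f (closure D) → ContDiffOn ℝ ∞ g (closure D) →
      fsNorm n D' k (fun x => B (f x) (g x)) ≤ C * fsNorm n D s f * fsNorm n D k g := by
  have hK : IsCompact (closure D') := (hDb.subset (subset_closure.trans hsub)).isCompact_closure
  obtain ⟨C, hC⟩ := exists_setLIntegral_energyDensity_bilin_le_mul B hn hs hk hD hK hsub
  refine ⟨√(C + 1), by positivity, fun f g hf hg => ?_⟩
  have hfg : ContDiffOn ℝ ∞ (fun x => B (f x) (g x)) (closure D) :=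
    (B.contDiff.comp_contDiffOn hf).clm_apply hg
  have henergy := (lintegral_mono_set (μ := volume) (subset_closure (s := D'))).trans
    (hC f g (hf.mono subset_closure) (hg.mono subset_closure))
  have hf0 := fsNormSq_nonneg s D f
  have hg0 := fsNormSq_nonneg k D g
  rw [← ofReal_fsNormSq hD hDb hfg (subset_closure.trans hsub), ← ofReal_fsNormSq hD hDb hf le_rfl,
    ← ofReal_fsNormSq hD hDb hg le_rfl, ← ENNReal.ofReal_mul hf0, ← ENNReal.ofReal_coe_nnreal,
    ← ENNReal.ofReal_mul C.coe_nonneg, ENNReal.ofReal_le_ofReal_iff (by positivity)] at henergy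
  rw [fsNorm, fsNorm, fsNorm, ← Real.sqrt_mul (by positivity), ← Real.sqrt_mul (by positivity)]
  exact Real.sqrt_le_sqrt (by linarith [mul_nonneg hf0 hg0])

/-- `‖f·g‖_{D',k} ≤ C ‖f‖_{D,s} ‖g‖_{D,k}` for `s ≥ 2n+3`, `k ≤ s`. -/
theorem statement3 (n s k : ℕ) (hn : 1 ≤ n) (hs : 2*n+3 ≤ s) (hk : k ≤ s)
    (D D' : Set (Fin (2*n+1) → ℝ)) (hD : IsOpen D) (hDb : IsBounded D)
    (hD' : IsOpen D') (hD'b : IsBounded D') (hsub : closure D' ⊆ D) :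
    ∃ C > (0:ℝ), ∀ f g : (Fin (2*n+1) → ℝ) → ℝ,
      ContDiffOn ℝ (⊤:ℕ∞) f (closure D) → ContDiffOn ℝ (⊤:ℕ∞) g (closure D) →
      fsNorm n D' k (fun x => f x * g x) ≤ C * fsNorm n D s f * fsNorm n D k g :=
  statement3_general (ContinuousLinearMap.mul ℝ ℝ) n s k hn (by omega) hk D D' hD hDb hsub

end
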